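/- Let G be a contraction critical quasi 5-connected graph (with at least one edge) in which every vertex has degree at least 4 and d_G(u) + d_G(v) ≥ 9 for all u, v at distance one or two. Then G has a vertex of degree exactly 4. -/

import Mathlib

/-!
If no vertex had degree four, all degrees would be at least five. A quasi 5-connected graph is then
5-connected: a 4-cut must be trivial, and a trivial one isolates a vertex of degree four
(`conn_of_quasi`). Since contracting an edge `xy` never gives a quasi 5-connected graph, the
contraction has a nontrivial 4-cut through the new vertex, that is, `x` and `y` lie in a 5-cut of
`G` with at least two vertices on each side (`crit_of`). Such a graph cannot be finite and have an
edge (`no_crit`), as shown by crossing these 5-cuts.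

Take a smallest side `A` of such a cut `T`. The cuts through edges at `A` meet `A` in at most two
vertices and leave at most one vertex of `A` on each side (`arith`). If `|A| ≥ 3`, this makes `A` a
triangle, each vertex of which misses two vertices of `T`, while each vertex of `T` misses at most
one vertex of `A`; this is six missing pairs against at most five (`min_two`). So `A = {y, y'}`.

A vertex of `T` missed by `y` or `y'` lies in a cut through `y` and `y'` (`miss_thru`), and if some
vertex of `T` lies in no such cut, then `y` and `y'` both miss a vertex of `T` (`exists_miss`).
Crossing two cuts, one through `y, y', t₁` and one through `y, y', t₂` with `t₁, t₂ ∈ T`, gives a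
new two-vertex fragment `{c, t₂}` or `{c, t₁}` with `c ∈ T` seeing both `t₁` and `t₂` (`CaseR`), or
two fragments `{c, t₂}` and `{d, t₁}` with `c, d ∈ T` (`CaseP`). Each cut through `y, y', x` splits
`T \ {x}` into two pairs without edges between them (`no_triple`). This first shows that `y` and
`y'` always miss a vertex of `T` each (`both_miss`), hence are adjacent, and then excludes `CaseR`
when `t₂` and `t₁` are the vertices missed by `y` and `y'` (`path_case`). Applying `path_case` to
`{y, y'}` and then to `{t₂, c}` yields a two-vertex fragment `{m, t₁}` whose cut contains at least
six vertices, which is absurd (`no_pair`).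
-/

open SimpleGraph Set

variable {V : Type*}

/-- `G` is `k`-connected: more than `k` vertices and removing fewer than `k`
vertices leaves a connected graph. -/
def IsKConnected (k : ℕ) [Fintype V] (G : SimpleGraph V) : Prop :=
  k + 1 ≤ Fintype.card V ∧
    ∀ S : Set V, S.ncard < k → (G.induce Sᶜ).Connected

/-- Contraction of the edge `xy`: identify `y` with `x`, simplifying multiple edges. -/
def contractE [DecidableEq V] (G : SimpleGraph V) (x y : V) :
    SimpleGraph {v : V // v ≠ y} :=
  SimpleGraph.fromRel (fun a b =>
    G.Adj a.1 b.1 ∨ (a.1 = x ∧ G.Adj y b.1) ∨ (b.1 = x ∧ G.Adj y a.1))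

/-- The (outer) neighborhood of a vertex set `A`. -/
def gBoundary (G : SimpleGraph V) (A : Set V) : Set V :=
  {v | v ∉ A ∧ ∃ a ∈ A, G.Adj v a}

/-- `S` separates `G`: the rest of the graph splits into two nonempty parts
with no edges between them. -/
def Separates (G : SimpleGraph V) (S : Set V) : Prop :=
  ∃ A B : Set V, A.Nonempty ∧ B.Nonempty ∧ Disjoint A B ∧ A ∪ B = Sᶜ ∧
    ∀ a ∈ A, ∀ b ∈ B, ¬ G.Adj a b

/-- `T` is a nontrivial 4-cut: `|T| = 4` and `G - T` splits into two parts,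
each of size at least 2, with no edges between them. -/
def IsNontrivialFourCut (G : SimpleGraph V) (T : Set V) : Prop :=
  T.ncard = 4 ∧ ∃ A B : Set V, 2 ≤ A.ncard ∧ 2 ≤ B.ncard ∧ Disjoint A B ∧
    A ∪ B = Tᶜ ∧ ∀ a ∈ A, ∀ b ∈ B, ¬ G.Adj a b

/-- `G` is quasi 5-connected: 4-connected without a nontrivial 4-cut. -/
def QuasiFiveConnected [Fintype V] (G : SimpleGraph V) : Prop :=
  IsKConnected 4 G ∧ ∀ T : Set V, ¬ IsNontrivialFourCut G T

/-- `G` is contraction critical quasi 5-connected. -/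
def ContractionCriticalQuasiFive [Fintype V] [DecidableEq V] (G : SimpleGraph V) : Prop :=
  QuasiFiveConnected G ∧
    ∀ x y : V, G.Adj x y → ¬ QuasiFiveConnected (contractE G x y)

/-- `A` is a fragment of `G`: both `A` and its "far side" are nonempty and the
neighborhood of `A` is a smallest separating set. -/
def IsFragment (G : SimpleGraph V) (A : Set V) : Prop :=
  A.Nonempty ∧ (Aᶜ \ gBoundary G A).Nonempty ∧
    ∀ S : Set V, Separates G S → (gBoundary G A).ncard ≤ S.ncard

/-- A nontrivial fragment: both sides have at least two vertices. -/
def IsNontrivialFragment (G : SimpleGraph V) (A : Set V) : Prop :=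
  IsFragment G A ∧ 2 ≤ A.ncard ∧ 2 ≤ (Aᶜ \ gBoundary G A).ncard

/-- Degree sum at least 9 for every pair of vertices at distance one or two. -/
def DegSumNine (G : SimpleGraph V) : Prop :=
  ∀ u v : V, (G.dist u v = 1 ∨ G.dist u v = 2) →
    9 ≤ (G.neighborSet u).ncard + (G.neighborSet v).ncard

namespace QFive

/-! ### Nontrivial 5-cuts -/

/-- `T` is a 5-cut of `G` and `A`, `A'` are two sides of it, with at least two vertices each, that
together exhaust the rest of the graph. The sides are called fragments below. -/
structure NCut {V : Type*} [Fintype V] (G : SimpleGraph V) (A T A' : Finset V) : Prop where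
  cover : ∀ v, v ∈ A ∨ v ∈ T ∨ v ∈ A'
  dAT : ∀ v ∈ A, v ∉ T
  dAA : ∀ v ∈ A, v ∉ A'
  dTA : ∀ v ∈ T, v ∉ A'
  nadj : ∀ a ∈ A, ∀ b ∈ A', ¬ G.Adj a b
  card : T.card = 5
  two : 2 ≤ A.card
  two' : A'.card ≥ 2

/-- The graphs under study: `conn` is 5-connectedness (a set `S` separating some vertex of `K`
from some vertex outside `K` has at least five elements), `deg` says that all degrees are at least
five (a set containing all neighbours of a vertex has at least five elements), and `edge` says that
every edge lies in a 5-cut with at least two vertices on each side. -/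
structure Crit {V : Type*} [Fintype V] (G : SimpleGraph V) : Prop where
  conn : ∀ K S : Finset V, (∃ a ∈ K, a ∉ S) → (∃ v, v ∉ K ∧ v ∉ S) →
    (∀ a ∈ K, a ∉ S → ∀ b, G.Adj a b → b ∈ K ∨ b ∈ S) → 5 ≤ S.card
  deg : ∀ (v : V) (S : Finset V), (∀ u, G.Adj v u → u ∈ S) → 5 ≤ S.card
  edge : ∀ x y, G.Adj x y → ∃ B T B', NCut G B T B' ∧ x ∈ T ∧ y ∈ T

variable {V : Type*} [Fintype V] [DecidableEq V] {G : SimpleGraph V}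
  {A T A' B S B' : Finset V}

lemma NCut.symm (h : NCut G A T A') : NCut G A' T A where
  cover v := by have := h.cover v; tauto
  dAT v hv hT := h.dTA v hT hv
  dAA v hv hA := h.dAA v hA hv
  dTA v hv hA := h.dAT v hA hv
  nadj a ha b hb hab := h.nadj b hb a ha hab.symm
  card := h.card
  two := h.two'
  two' := h.two

/-- The two sides and the cut partition the vertex set. -/
lemma NCut.dec (h : NCut G A T A') (X : Finset V) :
    X.card = (X ∩ A).card + (X ∩ T).card + (X ∩ A').card := by
  rw [← Finset.card_union_of_disjoint, ← Finset.card_union_of_disjoint]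
  · congr 1
    ext v
    have := h.cover v
    simp only [Finset.mem_union, Finset.mem_inter]
    tauto
  · rw [Finset.disjoint_left]
    intro v hv hv'
    simp only [Finset.mem_union, Finset.mem_inter] at hv hv'
    have := h.dAA v
    have := h.dTA v
    tauto
  · rw [Finset.disjoint_left]
    intro v hv hv'
    simp only [Finset.mem_inter] at hv hv'
    have := h.dAT v
    tauto

lemma NCut.dec' (h : NCut G A T A') (X : Finset V) :
    X.card = (A ∩ X).card + (T ∩ X).card + (A' ∩ X).card := by
  rw [Finset.inter_comm A, Finset.inter_comm T, Finset.inter_comm A']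
  exact h.dec X

/-- Neighbours of a vertex on the side `A` lie in `A` or in the cut. -/
lemma NCut.nbr (h : NCut G A T A') {a b : V} (ha : a ∈ A) (hab : G.Adj a b) : b ∈ A ∨ b ∈ T := by
  have := h.cover b
  have := h.nadj a ha b
  tauto

/-- By 5-connectedness every vertex of the cut has a neighbour on each side. -/
lemma NCut.full (hG : Crit G) (h : NCut G A T A') {x : V} (hx : x ∈ T) :
    ∃ a ∈ A, G.Adj a x := by
  by_contra! hc
  have h1 := hG.conn A (T.erase x)
    (by
      have h2 := h.two
      obtain ⟨a, ha⟩ := Finset.card_pos.1 (show 0 < A.card by omega)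
      exact ⟨a, ha, fun hh => h.dAT a ha (Finset.mem_of_mem_erase hh)⟩)
    ⟨x, fun hh => h.dAT x hh hx, by simp⟩
    (by
      intro a ha _ b hab
      rcases h.nbr ha hab with hb | hb
      · exact Or.inl hb
      · refine Or.inr (Finset.mem_erase.2 ⟨?_, hb⟩)
        rintro rfl
        exact hc a ha hab)
  rw [Finset.card_erase_of_mem hx, h.card] at h1
  omega

/-- A vertex whose neighbours all lie in a set of at most five vertices is adjacent to that
whole set. -/
lemma Crit.adj_of_subset (hG : Crit G) {v : V} {S : Finset V} (h : ∀ u, G.Adj v u → u ∈ S)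
    (hS : S.card ≤ 5) {s : V} (hs : s ∈ S) : G.Adj v s := by
  by_contra hc
  have := hG.deg v (S.erase s) (by
    intro u hu
    refine Finset.mem_erase.2 ⟨?_, h u hu⟩
    rintro rfl
    exact hc hu)
  rw [Finset.card_erase_of_mem hs] at this
  have := Finset.card_pos.2 ⟨s, hs⟩
  omega

/-- The set separating the corner `A ∩ B` from the rest, for two crossing cuts `T` and `S`. -/
def bd (A T B S : Finset V) : Finset V := (A ∩ S) ∪ (T ∩ S) ∪ (T ∩ B)

lemma mem_bd {v : V} : v ∈ bd A T B S ↔ (v ∈ A ∧ v ∈ S) ∨ (v ∈ T ∧ v ∈ S) ∨ (v ∈ T ∧ v ∈ B) := by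
  simp [bd]

lemma card_bd (h : NCut G A T A') (k : NCut G B S B') :
    (bd A T B S).card = (A ∩ S).card + (T ∩ S).card + (T ∩ B).card := by
  unfold bd
  rw [Finset.card_union_of_disjoint, Finset.card_union_of_disjoint]
  · rw [Finset.disjoint_left]
    intro v hv hv'
    simp only [Finset.mem_inter] at hv hv'
    exact h.dAT v hv.1 hv'.1
  · rw [Finset.disjoint_left]
    intro v hv hv'
    simp only [Finset.mem_union, Finset.mem_inter] at hv hv'
    have := k.dAT v
    tauto

lemma nbr_corner (h : NCut G A T A') (k : NCut G B S B') {a b : V} (ha : a ∈ A ∩ B)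
    (hab : G.Adj a b) : b ∈ A ∩ B ∨ b ∈ bd A T B S := by
  rw [Finset.mem_inter] at *
  rw [mem_bd]
  have := h.nbr ha.1 hab
  have := k.nbr ha.2 hab
  tauto

lemma not_mem_bd (h : NCut G A T A') (k : NCut G B S B') {a : V} (ha : a ∈ A ∩ B) :
    a ∉ bd A T B S := by
  rw [Finset.mem_inter] at ha
  rw [mem_bd]
  have := h.dAT a ha.1
  have := k.dAT a ha.2
  tauto

lemma not_mem_bd' (h : NCut G A T A') {a : V} (ha : a ∈ A') :
    a ∉ bd A T B S := by
  rw [mem_bd]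
  have := fun w => h.dAA a w ha
  have := fun w => h.dTA a w ha
  tauto

lemma NCut.ex' (h : NCut G A T A') : ∃ v, v ∈ A' := by
  have := h.two'
  exact Finset.card_pos.1 (show 0 < A'.card by omega)

/-- A nonempty corner `A ∩ B` of two crossing cuts is bounded by at least five vertices. -/
lemma cross (hG : Crit G) (h : NCut G A T A') (k : NCut G B S B') :
    0 < (A ∩ B).card → 5 ≤ (A ∩ S).card + (T ∩ S).card + (T ∩ B).card := by
  intro hp
  rw [← card_bd h k]
  obtain ⟨a, ha⟩ := Finset.card_pos.1 hp
  obtain ⟨v, hv⟩ := h.ex'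
  refine hG.conn (A ∩ B) _ ⟨a, ha, not_mem_bd h k ha⟩ ⟨v, ?_, not_mem_bd' h hv⟩
    (fun a ha _ b hab => nbr_corner h k ha hab)
  intro hh
  exact h.dAA v (Finset.mem_inter.1 hh).1 hv

/-- A corner with at least two vertices and exactly five bounding vertices is again a side of a
nontrivial 5-cut. -/
lemma cross_eq (h : NCut G A T A') (k : NCut G B S B') (h2 : 2 ≤ (A ∩ B).card)
    (h5 : (A ∩ S).card + (T ∩ S).card + (T ∩ B).card = 5) :
    NCut G (A ∩ B) (bd A T B S) (A' ∪ B') where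
  cover v := by
    rw [mem_bd, Finset.mem_inter, Finset.mem_union]
    have := h.cover v
    have := k.cover v
    tauto
  dAT v hv := not_mem_bd h k hv
  dAA v hv hv' := by
    rw [Finset.mem_inter] at hv
    rw [Finset.mem_union] at hv'
    exact hv'.elim (h.dAA v hv.1) (k.dAA v hv.2)
  dTA v hv hv' := by
    rw [mem_bd] at hv
    rw [Finset.mem_union] at hv'
    have := h.dAA v
    have := h.dTA v
    have := k.dAA v
    have := k.dTA v
    tauto
  nadj a ha b hb hab := by
    rw [Finset.mem_inter] at ha
    rw [Finset.mem_union] at hb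
    exact hb.elim (fun hb => h.nadj a ha.1 b hb hab) (fun hb => k.nadj a ha.2 b hb hab)
  card := by rw [card_bd h k, h5]
  two := h2
  two' := h.two'.trans (Finset.card_le_card Finset.subset_union_left)

/-- A corner vertex alone in a corner bounded by five vertices sees all of them. -/
lemma adj_corner (hG : Crit G) (h : NCut G A T A') (k : NCut G B S B') {z : V}
    (hz : z ∈ A ∩ B) (h1 : (A ∩ B).card ≤ 1)
    (h5 : (A ∩ S).card + (T ∩ S).card + (T ∩ B).card ≤ 5) {v : V} (hv : v ∈ bd A T B S) :
    G.Adj z v := by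
  refine hG.adj_of_subset (S := bd A T B S) ?_ (by rw [card_bd h k]; exact h5) hv
  intro u hu
  refine (nbr_corner h k hz hu).resolve_left fun hh => ?_
  have := Finset.card_le_one.1 h1 z hz u hh
  exact G.ne_of_adj hu this

/-! ### Smallest fragments -/

/-- A cut meeting a smallest fragment `A` contains at most two vertices of `A` and leaves at most
one on each side; the corners of `A` that are nonempty are bounded by exactly five vertices. This
is pure counting from `cross`, `cross_eq` and the minimality of `A`. -/
lemma arith (hG : Crit G) (h : NCut G A T A')
    (hmin : ∀ K S K', NCut G K S K' → A.card ≤ K.card)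
    (k : NCut G B S B') (ha : 0 < (A ∩ S).card) :
    (A ∩ S).card ≤ 2 ∧ (A ∩ B).card ≤ 1 ∧ (A ∩ B').card ≤ 1 ∧
    (0 < (A ∩ B).card → (A ∩ S).card + (T ∩ S).card + (T ∩ B).card = 5) ∧
    (0 < (A ∩ B').card → (A ∩ S).card + (T ∩ S).card + (T ∩ B').card = 5) := by
  have e1 := k.dec A
  have e2 := k.dec T
  have e3 := k.dec A'
  have e4 := h.dec' B
  have e5 := h.dec' S
  have e6 := h.dec' B'
  have c1 := cross hG h k
  have c2 := cross hG h k.symm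
  have c3 := cross hG h.symm k
  have c4 := cross hG h.symm k.symm
  have m1 := hmin _ _ _ h.symm
  have m2 := hmin _ _ _ k
  have m3 := hmin _ _ _ k.symm
  have t1 := h.card
  have t2 := k.card
  have t3 := h.two
  have n1 : 2 ≤ (A ∩ B).card → (A ∩ S).card + (T ∩ S).card + (T ∩ B).card = 5 →
    A.card ≤ (A ∩ B).card := fun x y => hmin _ _ _ (cross_eq h k x y)
  have n2 : 2 ≤ (A ∩ B').card → (A ∩ S).card + (T ∩ S).card + (T ∩ B').card = 5 →
    A.card ≤ (A ∩ B').card := fun x y => hmin _ _ _ (cross_eq h k.symm x y)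
  omega

/-- A vertex `z` of the smallest fragment `A` left on the side `B` of a cut `S` meeting `A` is alone
in its corner, hence sees all of `S ∩ (A ∪ T)`; if `S` contains two vertices of `A`, then `T ∩ B'`
consists of two vertices missed by `z`. -/
lemma out_aux (hG : Crit G) (h : NCut G A T A')
    (hmin : ∀ K S K', NCut G K S K' → A.card ≤ K.card)
    (k : NCut G B S B') (ha : 0 < (A ∩ S).card) {z : V} (hz : z ∈ A) (hzS : z ∈ B) :
    (∀ v ∈ S, v ∈ A ∨ v ∈ T → G.Adj z v) ∧
    ((A ∩ S).card = 2 → ∃ P ⊆ T, P.card = 2 ∧ ∀ x ∈ P, ¬ G.Adj z x) := by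
  obtain ⟨-, h1, -, h3, -⟩ := arith hG h hmin k ha
  have hzz : z ∈ A ∩ B := Finset.mem_inter.2 ⟨hz, hzS⟩
  have h5 := h3 (Finset.card_pos.2 ⟨z, hzz⟩)
  refine ⟨fun v hv hv' => adj_corner hG h k hzz h1 h5.le ?_, fun h2 => ?_⟩
  · rw [mem_bd]
    tauto
  · refine ⟨T ∩ B', Finset.inter_subset_left, ?_, fun x hx => k.nadj z hzS x
      (Finset.mem_inter.1 hx).2⟩
    have := k.dec T
    have := h.card
    omega

/-- `out_aux` for a vertex off the cut, on whichever side it lies. -/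
lemma out (hG : Crit G) (h : NCut G A T A')
    (hmin : ∀ K S K', NCut G K S K' → A.card ≤ K.card)
    (k : NCut G B S B') (ha : 0 < (A ∩ S).card) {z : V} (hz : z ∈ A) (hzS : z ∉ S) :
    (∀ v ∈ S, v ∈ A ∨ v ∈ T → G.Adj z v) ∧
    ((A ∩ S).card = 2 → ∃ P ⊆ T, P.card = 2 ∧ ∀ x ∈ P, ¬ G.Adj z x) := by
  rcases k.cover z with hB | hB | hB
  · exact out_aux hG h hmin k ha hz hB
  · exact absurd hB hzS
  · exact out_aux hG h hmin k.symm ha hz hB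

/-- A smallest fragment with at least two vertices has exactly two. With more vertices it would
be a triangle each of whose vertices misses two vertices of the cut, whereas every vertex of the
cut sees two of the three: six missing edges against at most five. -/
lemma min_two (hG : Crit G) (h : NCut G A T A')
    (hmin : ∀ K S K', NCut G K S K' → A.card ≤ K.card) : A.card = 2 := by
  by_contra hne
  have h3 : 3 ≤ A.card := by have := h.two; omega
  have pos : ∀ {S : Finset V} {y : V}, y ∈ A → y ∈ S → 0 < (A ∩ S).card := fun hA hS =>
    Finset.card_pos.2 ⟨_, Finset.mem_inter.2 ⟨hA, hS⟩⟩
  -- an edge inside `A`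
  have e0 : ∃ p ∈ A, ∃ q ∈ A, G.Adj p q := by
    obtain ⟨t, ht⟩ := Finset.card_pos.1 (show 0 < T.card by have := h.card; omega)
    obtain ⟨y, hy, hyt⟩ := h.full hG ht
    obtain ⟨B, S, B', k, hyS, -⟩ := hG.edge _ _ hyt
    obtain ⟨h2, -⟩ := arith hG h hmin k (pos hy hyS)
    obtain ⟨z, hz, hzS⟩ : ∃ z ∈ A, z ∉ S := by
      by_contra! hc
      have := Finset.inter_eq_left.2 hc
      rw [this] at h2
      omega
    exact ⟨z, hz, y, hy, (out hG h hmin k (pos hy hyS) hz hzS).1 y hyS (Or.inl hy)⟩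
  -- the cut through an edge inside `A` contains no further vertex of `A`
  have e1 : ∀ p ∈ A, ∀ q ∈ A, G.Adj p q → ∃ B S B', NCut G B S B' ∧ p ∈ S ∧ q ∈ S ∧
      (A ∩ S).card = 2 ∧ ∀ r ∈ A, r ≠ p → r ≠ q → r ∉ S := by
    intro p hp q hq hpq
    obtain ⟨B, S, B', k, hpS, hqS⟩ := hG.edge _ _ hpq
    obtain ⟨h2, -⟩ := arith hG h hmin k (pos hp hpS)
    have hsub : ({p, q} : Finset V) ⊆ A ∩ S := by
      intro v hv
      rw [Finset.mem_insert, Finset.mem_singleton] at hv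
      rcases hv with rfl | rfl <;> simp [*]
    have hc := Finset.card_pair (G.ne_of_adj hpq)
    have heq := Finset.eq_of_subset_of_card_le hsub (by omega)
    refine ⟨B, S, B', k, hpS, hqS, by rw [← heq, hc], fun r hr hrp hrq hrS => ?_⟩
    have : r ∈ A ∩ S := Finset.mem_inter.2 ⟨hr, hrS⟩
    rw [← heq] at this
    simp [hrp, hrq] at this
  have e2 : ∀ p ∈ A, ∀ q ∈ A, G.Adj p q → ∀ r ∈ A, r ≠ p → r ≠ q → G.Adj r p ∧ G.Adj r q := by
    intro p hp q hq hpq r hr hrp hrq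
    obtain ⟨B, S, B', k, hpS, hqS, -, hS⟩ := e1 p hp q hq hpq
    have := (out hG h hmin k (pos hp hpS) hr (hS r hr hrp hrq)).1
    exact ⟨this p hpS (Or.inl hp), this q hqS (Or.inl hq)⟩
  obtain ⟨p, hp, q, hq, hpq⟩ := e0
  have clique : ∀ r ∈ A, ∀ s ∈ A, r ≠ s → G.Adj r s := by
    have key : ∀ r ∈ A, ∀ s ∈ A, r ≠ s → r ≠ p → r ≠ q → G.Adj r s := by
      intro r hr s hs hrs hrp hrq
      have h1 := e2 p hp q hq hpq r hr hrp hrq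
      by_cases hsp : s = p
      · exact hsp ▸ h1.1
      · exact (e2 p hp r hr h1.1.symm s hs hsp hrs.symm).2.symm
    intro r hr s hs hrs
    by_cases hrp : r = p
    · by_cases hsq : s = q
      · rw [hrp, hsq]
        exact hpq
      · exact (key s hs r hr hrs.symm (fun hh => hrs (hrp.trans hh.symm)) hsq).symm
    · by_cases hrq : r = q
      · by_cases hsp : s = p
        · rw [hrq, hsp]
          exact hpq.symm
        · exact (key s hs r hr hrs.symm hsp (fun hh => hrs (hrq.trans hh.symm))).symm
      · exact key r hr s hs hrs hrp hrq
  -- a clique cannot meet both sides of a cut, so at most one vertex of `A` avoids the cut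
  have one : ∀ B S B', NCut G B S B' → 0 < (A ∩ S).card → A.card = 3 ∧ (A ∩ S).card = 2 := by
    intro B S B' k hS
    obtain ⟨h1, h2, h4, -⟩ := arith hG h hmin k hS
    have := k.dec A
    have : (A ∩ B).card = 0 ∨ (A ∩ B').card = 0 := by
      by_contra! hc
      obtain ⟨u, hu⟩ := Finset.card_pos.1 (Nat.pos_of_ne_zero hc.1)
      obtain ⟨v, hv⟩ := Finset.card_pos.1 (Nat.pos_of_ne_zero hc.2)
      rw [Finset.mem_inter] at hu hv
      refine k.nadj u hu.2 v hv.2 (clique u hu.1 v hv.1 ?_)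
      rintro rfl
      exact k.dAA u hu.2 hv.2
    omega
  have hA3 : A.card = 3 := by
    obtain ⟨B, S, B', k, hpS, -⟩ := hG.edge _ _ hpq
    exact (one B S B' k (pos hp hpS)).1
  -- every vertex of the cut misses at most one vertex of `A`
  have miss : ∀ x ∈ T, ∀ u ∈ A, ∀ v ∈ A, u ≠ v → ¬ G.Adj u x → ¬ G.Adj v x → False := by
    intro x hx u hu v hv huv hux hvx
    obtain ⟨y, hy, hyx⟩ := h.full hG hx
    obtain ⟨B, S, B', k, hyS, hxS⟩ := hG.edge _ _ hyx
    obtain ⟨-, h2⟩ := one B S B' k (pos hy hyS)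
    obtain ⟨z, hz, hzS⟩ : ∃ z ∈ A, z ∉ S := by
      by_contra! hc
      have := Finset.inter_eq_left.2 hc
      rw [this] at h2
      omega
    have hzx := (out hG h hmin k (pos hy hyS) hz hzS).1 x hxS (Or.inr hx)
    have hsub : ({y, z, u, v} : Finset V) ⊆ A := by
      intro w hw
      simp only [Finset.mem_insert, Finset.mem_singleton] at hw
      rcases hw with rfl | rfl | rfl | rfl <;> assumption
    have hcard : ({y, z, u, v} : Finset V).card = 4 := by
      have a1 : y ≠ z := by rintro rfl; exact hzS hyS
      have a2 : y ≠ u := by rintro rfl; exact hux hyx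
      have a3 : y ≠ v := by rintro rfl; exact hvx hyx
      have a4 : z ≠ u := by rintro rfl; exact hux hzx
      have a5 : z ≠ v := by rintro rfl; exact hvx hzx
      simp [a1, a2, a3, a4, a5, huv]
    have := Finset.card_le_card hsub
    omega
  have six : ∀ z ∈ A, ∃ P ⊆ T, P.card = 2 ∧ ∀ x ∈ P, ¬ G.Adj z x := by
    intro z hz
    have : 1 < (A.erase z).card := by rw [Finset.card_erase_of_mem hz]; omega
    obtain ⟨u, hu, v, hv, huv⟩ := Finset.one_lt_card.1 this
    rw [Finset.mem_erase] at hu hv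
    obtain ⟨B, S, B', k, huS, hvS, h2, hS⟩ := e1 u hu.2 v hv.2 (clique u hu.2 v hv.2 huv)
    exact (out hG h hmin k (pos hu.2 huS) hz (hS z hz hu.1.symm hv.1.symm)).2 h2
  obtain ⟨a, b, c, hab, hac, hbc, rfl⟩ := Finset.card_eq_three.1 hA3
  obtain ⟨P, hPT, hP2, hP⟩ := six a (by simp)
  obtain ⟨Q, hQT, hQ2, hQ⟩ := six b (by simp)
  obtain ⟨R, hRT, hR2, hR⟩ := six c (by simp)
  have d1 : Disjoint P Q := Finset.disjoint_left.2 fun x hx hx' =>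
    miss x (hPT hx) a (by simp) b (by simp) hab (hP x hx) (hQ x hx')
  have d2 : Disjoint (P ∪ Q) R := Finset.disjoint_left.2 fun x hx hx' => by
    rcases Finset.mem_union.1 hx with hx | hx
    · exact miss x (hPT hx) a (by simp) c (by simp) hac (hP x hx) (hR x hx')
    · exact miss x (hQT hx) b (by simp) c (by simp) hbc (hQ x hx) (hR x hx')
  have := Finset.card_le_card (Finset.union_subset (Finset.union_subset hPT hQT) hRT)
  rw [Finset.card_union_of_disjoint d2, Finset.card_union_of_disjoint d1, h.card] at this
  omega

/-! ### Two-vertex fragments -/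

/-- Some cut with both sides of size at least two contains `A` and `x`. -/
def Thru (G : SimpleGraph V) (A : Finset V) (x : V) : Prop :=
  ∃ B S B', NCut G B S B' ∧ A ⊆ S ∧ x ∈ S

variable {y y' : V}

lemma swap (h : NCut G {y, y'} T A') : NCut G {y', y} T A' := by
  rwa [Finset.pair_comm]

lemma NCut.ne (h : NCut G {y, y'} T A') : y ≠ y' := by
  rintro rfl
  have := h.two
  simp at this

/-- A cut through a two-vertex fragment and a vertex of its boundary `T` contains no further vertex
of `T` and has two vertices of `T` on each side. -/
lemma pair_cut (hG : Crit G) (h : NCut G A T A') (hA : A.card = 2) (k : NCut G B S B')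
    (hS : A ⊆ S) {x : V} (hx : x ∈ T) (hxS : x ∈ S) :
    (T ∩ S).card = 1 ∧ (T ∩ B).card = 2 ∧ (T ∩ B').card = 2 := by
  have e1 := k.dec A
  have e2 := k.dec T
  have e3 := k.dec A'
  have e4 := h.dec' B
  have e5 := h.dec' S
  have e6 := h.dec' B'
  have c3 := cross hG h.symm k
  have c4 := cross hG h.symm k.symm
  have t1 := h.card
  have t2 := k.card
  have t3 := k.two
  have t4 := k.two'
  have t5 : 0 < (T ∩ S).card := Finset.card_pos.2 ⟨x, Finset.mem_inter.2 ⟨hx, hxS⟩⟩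
  have t6 : (A ∩ S).card = 2 := by rw [Finset.inter_eq_left.2 hS, hA]
  omega

lemma pair_cut_eq (hG : Crit G) (h : NCut G A T A') (hA : A.card = 2) (k : NCut G B S B')
    (hS : A ⊆ S) {x : V} (hx : x ∈ T) (hxS : x ∈ S) {p : V} (hp : p ∈ T) (hpS : p ∈ S) :
    p = x :=
  Finset.card_le_one.1 (pair_cut hG h hA k hS hx hxS).1.le p (Finset.mem_inter.2 ⟨hp, hpS⟩) x
    (Finset.mem_inter.2 ⟨hx, hxS⟩)

/-- A cut through `A` and `x` splits `T \ {x}` into two pairs, so `T \ {x}` contains no connected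
triple. -/
lemma no_triple (hG : Crit G) (h : NCut G A T A') (hA : A.card = 2) {x p q r : V}
    (hx : x ∈ T) (hT : Thru G A x) (hp : p ∈ T) (hq : q ∈ T) (hr : r ∈ T)
    (hpx : p ≠ x) (hqx : q ≠ x) (hrx : r ≠ x) (hrp : r ≠ p) (hrq : r ≠ q)
    (hpq : G.Adj p q) (hadj : G.Adj r p ∨ G.Adj r q) : False := by
  obtain ⟨B, S, B', k, hAS, hxS⟩ := hT
  have hn : ∀ v ∈ T, v ≠ x → v ∉ S := fun v hv hvx hvS =>
    hvx (pair_cut_eq hG h hA k hAS hx hxS hv hvS)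
  have main : ∀ {B B' : Finset V}, NCut G B S B' → p ∈ B → False := by
    intro B B' k hpB
    have hqB := (k.nbr hpB hpq).resolve_right (hn q hq hqx)
    have hrB : r ∈ B := by
      rcases hadj with ha | ha
      · exact (k.nbr hpB ha.symm).resolve_right (hn r hr hrx)
      · exact (k.nbr hqB ha.symm).resolve_right (hn r hr hrx)
    have h2 := (pair_cut hG h hA k hAS hx hxS).2.1
    have hsub : ({p, q, r} : Finset V) ⊆ T ∩ B := by
      intro v hv
      simp only [Finset.mem_insert, Finset.mem_singleton] at hv
      rw [Finset.mem_inter]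
      rcases hv with rfl | rfl | rfl <;> exact ⟨by assumption, by assumption⟩
    have := Finset.card_le_card hsub
    rw [Finset.card_eq_three.2 ⟨p, q, r, G.ne_of_adj hpq, hrp.symm, hrq.symm, rfl⟩] at this
    omega
  rcases k.cover p with hB | hB | hB
  · exact main k hB
  · exact hn p hp hpx hB
  · exact main k.symm hB

lemma pair_one_aux (hG : Crit G) (h : NCut G {y, y'} T A') (k : NCut G B S B')
    (hy : y ∈ S) (hy' : y' ∈ B) : ∃ w ∈ T, w ∉ S ∧ ¬ G.Adj y' w := by
  have hA : ({y, y'} : Finset V).card = 2 := Finset.card_pair h.ne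
  have e1 := k.dec {y, y'}
  have e6 := h.dec' B'
  have c4 := cross hG h.symm k.symm
  have e5 := h.dec' S
  have t2 := k.card
  have t4 := k.two'
  have a1 : 0 < (({y, y'} : Finset V) ∩ S).card := Finset.card_pos.2 ⟨y, by simp [hy]⟩
  have a2 : 0 < (({y, y'} : Finset V) ∩ B).card := Finset.card_pos.2 ⟨y', by simp [hy']⟩
  obtain ⟨w, hw⟩ := Finset.card_pos.1 (show 0 < (T ∩ B').card by omega)
  rw [Finset.mem_inter] at hw
  exact ⟨w, hw.1, fun hwS => k.dTA w hwS hw.2, k.nadj y' hy' w hw.2⟩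

/-- If a cut `S` contains `y` but not `y'`, then `y'` misses a vertex of `T` off `S`, namely one on
the side of `S` that does not contain `y'`. -/
lemma pair_one (hG : Crit G) (h : NCut G {y, y'} T A') (k : NCut G B S B')
    (hy : y ∈ S) (hy' : y' ∉ S) : ∃ w ∈ T, w ∉ S ∧ ¬ G.Adj y' w := by
  rcases k.cover y' with hB | hB | hB
  · exact pair_one_aux hG h k hy hB
  · exact absurd hB hy'
  · exact pair_one_aux hG h k.symm hy hB

lemma pair_nbr (h : NCut G {y, y'} T A') {u : V} (hu : G.Adj y u) : u = y' ∨ u ∈ T := by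
  rcases h.nbr (by simp) hu with h1 | h1
  · rw [Finset.mem_insert, Finset.mem_singleton] at h1
    exact Or.inl (h1.resolve_left (G.ne_of_adj hu).symm)
  · exact Or.inr h1

/-- As `y` has degree at least five, it misses at most one vertex of `T`. -/
lemma pair_unique (hG : Crit G) (h : NCut G {y, y'} T A') {w z : V} (hw : w ∈ T) (hz : z ∈ T)
    (hyw : ¬ G.Adj y w) (hyz : ¬ G.Adj y z) : w = z := by
  by_contra hwz
  have := hG.deg y (insert y' ((T.erase w).erase z)) (by
    intro u hu
    rcases pair_nbr h hu with rfl | hT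
    · simp
    · refine Finset.mem_insert_of_mem (Finset.mem_erase.2 ⟨?_, Finset.mem_erase.2 ⟨?_, hT⟩⟩)
      · rintro rfl; exact hyz hu
      · rintro rfl; exact hyw hu)
  have h1 := Finset.card_insert_le y' ((T.erase w).erase z)
  rw [Finset.card_erase_of_mem (Finset.mem_erase.2 ⟨Ne.symm hwz, hz⟩),
    Finset.card_erase_of_mem hw, h.card] at h1
  omega

lemma pair_adj_of_miss (hG : Crit G) (h : NCut G {y, y'} T A') {w : V} (hw : w ∈ T)
    (hyw : ¬ G.Adj y w) : G.Adj y y' := by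
  by_contra hyy
  have := hG.deg y (T.erase w) (by
    intro u hu
    rcases pair_nbr h hu with rfl | hT
    · exact absurd hu hyy
    · refine Finset.mem_erase.2 ⟨?_, hT⟩
      rintro rfl; exact hyw hu)
  rw [Finset.card_erase_of_mem hw, h.card] at this
  omega

lemma pair_bd (hG : Crit G) (h : NCut G {y, y'} T A') {x : V} (hx : x ∈ T) :
    G.Adj y x ∨ G.Adj y' x := by
  obtain ⟨a, ha, hax⟩ := h.full hG hx
  rw [Finset.mem_insert, Finset.mem_singleton] at ha
  rcases ha with rfl | rfl <;> simp [hax]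

/-- If `y'` misses no vertex of `T` other than `x`, then by `pair_one` every cut through the edge
`yx` also contains `y'`. -/
lemma edge_thru (hG : Crit G) (h : NCut G {y, y'} T A') {x : V}
    (hyx : G.Adj y x) (hn : ∀ w ∈ T, ¬ G.Adj y' w → w = x) : Thru G {y, y'} x := by
  obtain ⟨B, S, B', k, hyS, hxS⟩ := hG.edge _ _ hyx
  refine ⟨B, S, B', k, ?_, hxS⟩
  intro v hv
  rw [Finset.mem_insert, Finset.mem_singleton] at hv
  rcases hv with rfl | rfl
  · exact hyS
  · by_contra hv
    obtain ⟨w, hwT, hwS, hw⟩ := pair_one hG h k hyS hv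
    exact hwS (hn w hwT hw ▸ hxS)

lemma thru_swap {x : V} (h : Thru G {y, y'} x) : Thru G {y', y} x := by
  rwa [Finset.pair_comm]

/-- A vertex `x` of `T` missed by `y` lies in a cut through `y` and `y'`: it is adjacent to `y'`, and
`y` misses no other vertex of `T`. -/
lemma miss_thru (hG : Crit G) (h : NCut G {y, y'} T A') {x : V} (hx : x ∈ T)
    (hyx : ¬ G.Adj y x) : Thru G {y, y'} x :=
  thru_swap (edge_thru hG (swap h) ((pair_bd hG h hx).resolve_left hyx)
    fun _ hw hyw => pair_unique hG h hw hx hyw hyx)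

/-- If some vertex of `T` lies in no cut through `y` and `y'`, then `y` misses a vertex of `T`. By
symmetry so does `y'`. -/
lemma exists_miss (hG : Crit G) (h : NCut G {y, y'} T A') {x : V} (hx : x ∈ T)
    (hT : ¬ Thru G {y, y'} x) : ∃ w ∈ T, ¬ G.Adj y w := by
  by_contra! hc
  have hy'x : G.Adj y' x := by
    by_contra hn
    exact hT (thru_swap (miss_thru hG (swap h) hx hn))
  exact hT (thru_swap (edge_thru hG (swap h) hy'x fun w hw hn => absurd (hc w hw) hn))

/-! ### Crossing two cuts through a two-vertex fragment -/

lemma NCut.dec_inter (k : NCut G B S B') (X Y : Finset V) :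
    (X ∩ Y).card = (X ∩ B ∩ Y).card + (X ∩ S ∩ Y).card + (X ∩ B' ∩ Y).card := by
  rw [Finset.inter_right_comm X B, Finset.inter_right_comm X S, Finset.inter_right_comm X B']
  exact k.dec _

variable {B₁ S₁ B₁' B₂ S₂ B₂' : Finset V} {t₁ t₂ : V}

/-- The vertices of `A` lie in both cuts, but their only neighbours in the corner `B₁ ∩ B₂` are the
vertices of `T` there. If the corner has a vertex outside `T`, then the corner minus `T` is
separated from the rest by these vertices of `T` and the boundary of the corner minus `A`, so
5-connectedness applies to it. -/
lemma corner_two (hG : Crit G) (h : NCut G A T A') (hA : A.card = 2)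
    (k₁ : NCut G B₁ S₁ B₁') (k₂ : NCut G B₂ S₂ B₂') (h₁ : A ⊆ S₁) (h₂ : A ⊆ S₂)
    (hlt : (T ∩ B₁ ∩ B₂).card < (B₁ ∩ B₂).card) :
    7 ≤ (B₁ ∩ S₂).card + (S₁ ∩ S₂).card + (S₁ ∩ B₂).card + (T ∩ B₁ ∩ B₂).card := by
  have hAb : A ⊆ bd B₁ S₁ B₂ S₂ := fun v hv => by
    rw [mem_bd]
    exact Or.inr (Or.inl ⟨h₁ hv, h₂ hv⟩)
  have key := hG.conn ((B₁ ∩ B₂) \ T) ((bd B₁ S₁ B₂ S₂ \ A) ∪ (T ∩ B₁ ∩ B₂)) ?_ ?_ ?_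
  · have h3 := Finset.card_union_le (bd B₁ S₁ B₂ S₂ \ A) (T ∩ B₁ ∩ B₂)
    have h4 := Finset.card_le_card hAb
    rw [card_bd k₁ k₂, hA] at h4
    rw [Finset.card_sdiff_of_subset hAb, card_bd k₁ k₂, hA] at h3
    omega
  · obtain ⟨z, hz, hzT⟩ := Finset.exists_mem_notMem_of_card_lt_card hlt
    have hzb := not_mem_bd k₁ k₂ hz
    refine ⟨z, ?_, ?_⟩
    · rw [Finset.mem_sdiff]
      refine ⟨hz, fun hT => hzT ?_⟩
      simp only [Finset.mem_inter] at hz ⊢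
      tauto
    · rw [Finset.mem_union, Finset.mem_sdiff]
      tauto
  · obtain ⟨y, hy⟩ := Finset.card_pos.1 (show 0 < A.card by omega)
    have := h.dAT y hy
    refine ⟨y, fun hh => ?_, ?_⟩
    · rw [Finset.mem_sdiff, Finset.mem_inter] at hh
      exact k₁.dAT y hh.1.1 (h₁ hy)
    · simp only [Finset.mem_union, Finset.mem_sdiff, Finset.mem_inter]
      tauto
  · intro a ha _ b hab
    rw [Finset.mem_sdiff] at ha
    have hb := nbr_corner k₁ k₂ ha.1 hab
    have hbA : b ∉ A := by
      intro hbA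
      rcases h.nbr hbA hab.symm with haA | haT
      · rw [Finset.mem_inter] at ha
        exact k₁.dAT a ha.1.1 (h₁ haA)
      · exact ha.2 haT
    simp only [Finset.mem_union, Finset.mem_sdiff, Finset.mem_inter] at hb ⊢
    tauto

/-- Counting for two cuts through the two-vertex fragment `A`, one containing `t₁` and the other
`t₂`. Either the corner `B₁ ∩ B₂` is a single vertex of `T` and the two corners next to it are
empty, or `B₁ ∩ B₂` is empty and these two corners are single vertices of `T`. -/
lemma crossing (hG : Crit G) (h : NCut G A T A') (hA : A.card = 2)
    (k₁ : NCut G B₁ S₁ B₁') (k₂ : NCut G B₂ S₂ B₂') (h₁ : A ⊆ S₁) (h₂ : A ⊆ S₂)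
    (ht₁ : t₁ ∈ T) (ht₂ : t₂ ∈ T) (hs₁ : t₁ ∈ S₁) (hs₂ : t₂ ∈ S₂) (hb₁ : t₁ ∈ B₂)
    (hb₂ : t₂ ∈ B₁) :
    ((B₁ ∩ B₂).card = 1 ∧ (T ∩ B₁ ∩ B₂).card = 1 ∧
      (B₁ ∩ S₂).card + (S₁ ∩ S₂).card + (S₁ ∩ B₂).card = 5 ∧
      (B₁ ∩ B₂').card = 0 ∧ (B₁' ∩ B₂).card = 0 ∧
      ((B₁ ∩ S₂).card = 1 ∨ (S₁ ∩ B₂).card = 1)) ∨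
    ((B₁ ∩ B₂).card = 0 ∧ (B₁ ∩ B₂').card = 1 ∧ (T ∩ B₁ ∩ B₂').card = 1 ∧
      (B₁' ∩ B₂).card = 1 ∧ (T ∩ B₁' ∩ B₂).card = 1 ∧
      (B₁ ∩ S₂).card + (S₁ ∩ S₂).card + (S₁ ∩ B₂').card = 5 ∧
      (B₁' ∩ S₂).card + (S₁ ∩ S₂).card + (S₁ ∩ B₂).card = 5 ∧
      (B₁ ∩ S₂).card = 1 ∧ (S₁ ∩ B₂).card = 1 ∧ 0 < (B₁' ∩ B₂').card ∧
      (3 ≤ (S₁ ∩ S₂).card →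
        (B₁' ∩ S₂).card + (S₁ ∩ S₂).card + (S₁ ∩ B₂').card = 5)) := by
  have e1 := k₂.dec B₁
  have e2 := k₂.dec S₁
  have e3 := k₂.dec B₁'
  have e4 := k₁.dec' B₂
  have e5 := k₁.dec' S₂
  have e6 := k₁.dec' B₂'
  have c1 := cross hG k₁ k₂
  have c2 := cross hG k₁ k₂.symm
  have c3 := cross hG k₁.symm k₂
  have c4 := cross hG k₁.symm k₂.symm
  have d1 := corner_two hG h hA k₁ k₂ h₁ h₂
  have d2 := corner_two hG h hA k₁ k₂.symm h₁ h₂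
  have d3 := corner_two hG h hA k₁.symm k₂ h₁ h₂
  have d4 := corner_two hG h hA k₁.symm k₂.symm h₁ h₂
  have sub : ∀ X Y : Finset V, (T ∩ X ∩ Y).card ≤ (X ∩ Y).card := fun X Y =>
    Finset.card_le_card (Finset.inter_subset_inter_right Finset.inter_subset_right)
  have s1 := sub B₁ B₂
  have s2 := sub B₁ B₂'
  have s3 := sub B₁' B₂
  have s4 := sub B₁' B₂'
  have f1 := k₂.dec (T ∩ B₁)
  have f2 := k₂.dec (T ∩ S₁)
  have f3 := k₂.dec (T ∩ B₁')
  have g1 := k₁.dec_inter T B₂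
  have g2 := k₁.dec_inter T S₂
  have g3 := k₁.dec_inter T B₂'
  obtain ⟨p1, p2, p3⟩ := pair_cut hG h hA k₁ h₁ ht₁ hs₁
  obtain ⟨q1, q2, q3⟩ := pair_cut hG h hA k₂ h₂ ht₂ hs₂
  have r1 : 0 < (T ∩ S₁ ∩ B₂).card := Finset.card_pos.2 ⟨t₁, by simp [*]⟩
  have r2 : 0 < (T ∩ B₁ ∩ S₂).card := Finset.card_pos.2 ⟨t₂, by simp [*]⟩
  have r3 : 2 ≤ (S₁ ∩ S₂).card := hA ▸ Finset.card_le_card (Finset.subset_inter h₁ h₂)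
  have u1 := k₁.card
  have u2 := k₂.card
  have s5 := sub B₁ S₂
  have s6 := sub S₁ B₂
  generalize (B₁ ∩ B₂).card = x11 at *
  generalize (B₁ ∩ B₂').card = x13 at *
  generalize (B₁' ∩ B₂).card = x31 at *
  generalize (B₁' ∩ B₂').card = x33 at *
  generalize (T ∩ B₁ ∩ B₂).card = n11 at *
  generalize (T ∩ B₁ ∩ B₂').card = n13 at *
  generalize (T ∩ B₁' ∩ B₂).card = n31 at *
  generalize (T ∩ B₁' ∩ B₂').card = n33 at *
  have hcase : (n11 = 1 ∧ n13 = 0 ∧ n31 = 0 ∧ n33 = 2) ∨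
    (n11 = 0 ∧ n13 = 1 ∧ n31 = 1 ∧ n33 = 1) := by omega
  clear f1 f2 f3 g1 g2 g3 sub p1 p2 p3 q1 q2 q3
  rcases hcase with ⟨rfl, rfl, rfl, rfl⟩ | ⟨rfl, rfl, rfl, rfl⟩
  · left
    omega
  · right
    omega

/-- Every vertex bounding a nonempty corner with at most five bounding vertices has a neighbour in
that corner. -/
lemma corner_full (hG : Crit G) (h : NCut G A T A') (k : NCut G B S B')
    (hp : 0 < (A ∩ B).card) (h5 : (A ∩ S).card + (T ∩ S).card + (T ∩ B).card ≤ 5) {x : V}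
    (hx : x ∈ bd A T B S) : ∃ f ∈ A ∩ B, G.Adj f x := by
  by_contra! hc
  obtain ⟨a, ha⟩ := Finset.card_pos.1 hp
  have h1 := hG.conn (A ∩ B) ((bd A T B S).erase x)
    ⟨a, ha, fun hh => not_mem_bd h k ha (Finset.mem_of_mem_erase hh)⟩
    ⟨x, fun hh => not_mem_bd h k hh hx, by simp⟩
    (by
      intro a ha _ b hab
      rcases nbr_corner h k ha hab with hb | hb
      · exact Or.inl hb
      · refine Or.inr (Finset.mem_erase.2 ⟨?_, hb⟩)
        rintro rfl
        exact hc a ha hab)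
  rw [Finset.card_erase_of_mem hx, card_bd h k] at h1
  have := Finset.card_pos.2 ⟨x, hx⟩
  rw [card_bd h k] at this
  omega

lemma eq_pair {X : Finset V} {c t : V} (hc : c ∈ X) (ht : t ∈ X) (hct : c ≠ t)
    (hX : X.card ≤ 2) : X = {c, t} := by
  symm
  apply Finset.eq_of_subset_of_card_le
  · intro v hv
    rw [Finset.mem_insert, Finset.mem_singleton] at hv
    rcases hv with rfl | rfl <;> assumption
  · rwa [Finset.card_pair hct]

/-- First way in which cuts through `y, y', t₁` and `y, y', t₂` can cross: the corner `B₁ ∩ B₂` is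
a single vertex `c` of `T`, which sees `y, y', t₁, t₂` and forms a side of one of the cuts together
with `t₂` or `t₁`. -/
def CaseR (G : SimpleGraph V) (y y' t₁ t₂ : V) (T B₁ B₂ : Finset V) : Prop :=
  ∃ c ∈ T, c ≠ t₁ ∧ c ≠ t₂ ∧ G.Adj c y ∧ G.Adj c y' ∧ G.Adj c t₁ ∧ G.Adj c t₂ ∧
    (B₁ = {c, t₂} ∨ B₂ = {c, t₁})

/-- Second way in which cuts through `y, y', t₁` and `y, y', t₂` can cross: the corner `B₁ ∩ B₂` is
empty, and both cuts have a two-vertex side, `{c, t₂}` and `{d, t₁}`, with `c, d` in `T`. If the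
cuts share at least three vertices, each of these has a neighbour in the far corner
`B₁' ∩ B₂'`. -/
def CaseP (G : SimpleGraph V) (y y' t₁ t₂ : V) (T B₁ S₁ B₁' B₂ S₂ B₂' : Finset V) : Prop :=
  ∃ c ∈ T, ∃ d ∈ T, c ≠ t₁ ∧ c ≠ t₂ ∧ c ∈ B₂' ∧ d ∈ B₁' ∧ B₁ = {c, t₂} ∧ B₂ = {d, t₁} ∧
    G.Adj c y ∧ G.Adj c y' ∧ G.Adj c t₂ ∧ G.Adj d y ∧ G.Adj d y' ∧ G.Adj d t₁ ∧
    (∀ v ∈ S₁ ∩ S₂, G.Adj c v ∧ G.Adj d v) ∧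
    (3 ≤ (S₁ ∩ S₂).card → ∀ v ∈ S₁ ∩ S₂, ∃ f ∈ B₁' ∩ B₂', G.Adj f v)

/-- The two cases of `crossing`, with the single corner vertices named and their adjacencies read off
from `adj_corner`. -/
lemma crossing_cases (hG : Crit G) (h : NCut G {y, y'} T A')
    (k₁ : NCut G B₁ S₁ B₁') (k₂ : NCut G B₂ S₂ B₂') (h₁ : {y, y'} ⊆ S₁) (h₂ : {y, y'} ⊆ S₂)
    (ht₁ : t₁ ∈ T) (ht₂ : t₂ ∈ T) (hs₁ : t₁ ∈ S₁) (hs₂ : t₂ ∈ S₂) (hb₁ : t₁ ∈ B₂)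
    (hb₂ : t₂ ∈ B₁) :
    CaseR G y y' t₁ t₂ T B₁ B₂ ∨ CaseP G y y' t₁ t₂ T B₁ S₁ B₁' B₂ S₂ B₂' := by
  have hA : ({y, y'} : Finset V).card = 2 := Finset.card_pair h.ne
  have y1 : y ∈ S₁ := h₁ (by simp)
  have y2 : y ∈ S₂ := h₂ (by simp)
  have y1' : y' ∈ S₁ := h₁ (by simp)
  have y2' : y' ∈ S₂ := h₂ (by simp)
  have e1 := k₂.dec B₁
  have e4 := k₁.dec' B₂
  have ex : ∀ {X Y : Finset V}, (T ∩ X ∩ Y).card = 1 → ∃ c ∈ T, c ∈ X ∧ c ∈ Y ∧ c ∈ X ∩ Y := by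
    intro X Y hXY
    obtain ⟨c, hc⟩ := Finset.card_pos.1 (hXY ▸ Nat.one_pos)
    simp only [Finset.mem_inter] at hc
    exact ⟨c, hc.1.1, hc.1.2, hc.2, Finset.mem_inter.2 ⟨hc.1.2, hc.2⟩⟩
  rcases crossing hG h hA k₁ k₂ h₁ h₂ ht₁ ht₂ hs₁ hs₂ hb₁ hb₂ with
    ⟨c1, n1, b1, z1, z2, o⟩ | ⟨c0, c1, n1, c2, n2, b1, b2, o1, o2, p, q⟩
  · left
    obtain ⟨c, hcT, hc1, hc2, hc⟩ := ex n1
    have adj := @adj_corner _ _ _ G _ _ _ _ _ _ hG k₁ k₂ c hc c1.le b1.le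
    have n1 : c ≠ t₁ := by rintro rfl; exact k₁.dAT _ hc1 hs₁
    have n2 : c ≠ t₂ := by rintro rfl; exact k₂.dAT _ hc2 hs₂
    refine ⟨c, hcT, n1, n2, adj ?_, adj ?_, adj ?_, adj ?_, ?_⟩
    · rw [mem_bd]; tauto
    · rw [mem_bd]; tauto
    · rw [mem_bd]; tauto
    · rw [mem_bd]; tauto
    · rcases o with o | o
      · exact Or.inl (eq_pair hc1 hb₂ n2 (by omega))
      · exact Or.inr (eq_pair hc2 hb₁ n1 (by omega))
  · right
    obtain ⟨c, hcT, hc1, hc2, hc⟩ := ex n1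
    obtain ⟨d, hdT, hd1, hd2, hd⟩ := ex n2
    have adj := @adj_corner _ _ _ G _ _ _ _ _ _ hG k₁ k₂.symm c hc c1.le b1.le
    have adj' := @adj_corner _ _ _ G _ _ _ _ _ _ hG k₁.symm k₂ d hd c2.le b2.le
    have n1 : c ≠ t₁ := by rintro rfl; exact k₁.dAT _ hc1 hs₁
    have n2 : c ≠ t₂ := by rintro rfl; exact k₂.dTA _ hs₂ hc2
    have n3 : d ≠ t₁ := by rintro rfl; exact k₁.dTA _ hs₁ hd1
    refine ⟨c, hcT, d, hdT, n1, n2, hc2, hd1, eq_pair hc1 hb₂ n2 (by omega),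
      eq_pair hd2 hb₁ n3 (by omega), adj ?_, adj ?_, adj ?_, adj' ?_, adj' ?_, adj' ?_, ?_, ?_⟩
    · rw [mem_bd]; tauto
    · rw [mem_bd]; tauto
    · rw [mem_bd]; tauto
    · rw [mem_bd]; tauto
    · rw [mem_bd]; tauto
    · rw [mem_bd]; tauto
    · intro v hv
      rw [Finset.mem_inter] at hv
      refine ⟨adj ?_, adj' ?_⟩
      · rw [mem_bd]; tauto
      · rw [mem_bd]; tauto
    · intro h3 v hv
      rw [Finset.mem_inter] at hv
      refine corner_full hG k₁.symm k₂.symm p (q h3).le ?_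
      rw [mem_bd]; tauto

/-- After naming the sides suitably, `t₂` lies in `B₁` and `t₁` in `B₂`. -/
lemma crossing_exists (hG : Crit G) (h : NCut G {y, y'} T A') (ht₁ : t₁ ∈ T) (ht₂ : t₂ ∈ T)
    (hne : t₁ ≠ t₂) (hr₁ : Thru G {y, y'} t₁) (hr₂ : Thru G {y, y'} t₂) :
    ∃ B₁ S₁ B₁' B₂ S₂ B₂', NCut G B₁ S₁ B₁' ∧ NCut G B₂ S₂ B₂' ∧ {y, y'} ⊆ S₁ ∧ {y, y'} ⊆ S₂ ∧
      t₁ ∈ S₁ ∧ t₂ ∈ S₂ ∧ t₁ ∈ B₂ ∧ t₂ ∈ B₁ ∧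
      (CaseR G y y' t₁ t₂ T B₁ B₂ ∨ CaseP G y y' t₁ t₂ T B₁ S₁ B₁' B₂ S₂ B₂') := by
  have hA : ({y, y'} : Finset V).card = 2 := Finset.card_pair h.ne
  have side : ∀ {s t : V}, s ∈ T → t ∈ T → s ≠ t → Thru G {y, y'} s →
      ∃ B S B', NCut G B S B' ∧ {y, y'} ⊆ S ∧ s ∈ S ∧ t ∈ B := by
    rintro s t hs ht hst ⟨B, S, B', k, hS, hsS⟩
    rcases k.cover t with hB | hB | hB
    · exact ⟨B, S, B', k, hS, hsS, hB⟩
    · exact absurd (pair_cut_eq hG h hA k hS hs hsS ht hB).symm hst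
    · exact ⟨B', S, B, k.symm, hS, hsS, hB⟩
  obtain ⟨B₁, S₁, B₁', k₁, h₁, hs₁, hb₂⟩ := side ht₁ ht₂ hne hr₁
  obtain ⟨B₂, S₂, B₂', k₂, h₂, hs₂, hb₁⟩ := side ht₂ ht₁ hne.symm hr₂
  exact ⟨B₁, S₁, B₁', B₂, S₂, B₂', k₁, k₂, h₁, h₂, hs₁, hs₂, hb₁, hb₂,
    crossing_cases hG h k₁ k₂ h₁ h₂ ht₁ ht₂ hs₁ hs₂ hb₁ hb₂⟩

/-- Each vertex of a two-vertex fragment misses a vertex of the cut. Otherwise every vertex of `T`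
lies in a cut through `y` and `y'`, and the crossing of two such cuts gives a connected triple in
`T`, contrary to `no_triple`. -/
lemma both_miss (hG : Crit G) (h : NCut G {y, y'} T A') :
    ∃ t₂ ∈ T, ¬ G.Adj y t₂ := by
  by_cases hall : ∃ x ∈ T, ¬ Thru G {y, y'} x
  · obtain ⟨x, hx, hT⟩ := hall
    exact exists_miss hG h hx hT
  push Not at hall
  exfalso
  have hA : ({y, y'} : Finset V).card = 2 := Finset.card_pair h.ne
  obtain ⟨t₁, ht₁, t₂, ht₂, hne⟩ := Finset.one_lt_card.1 (show 1 < T.card by rw [h.card]; omega)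
  have key : ∀ {c s t : V} {S B' : Finset V}, c ∈ T → s ∈ T → t ∈ T → c ≠ s → c ≠ t → s ≠ t →
      G.Adj c t → NCut G {c, t} S B' → s ∈ S → False := by
    intro c s t S B' hc hs ht hcs hct hst hadj k hsS
    obtain ⟨x, hx, hxn⟩ := Finset.exists_mem_notMem_of_card_lt_card
      (show ({c, s, t} : Finset V).card < T.card by
        rw [h.card, Finset.card_eq_three.2 ⟨c, s, t, hcs, hct, hst, rfl⟩]; omega)
    simp only [Finset.mem_insert, Finset.mem_singleton, not_or] at hxn
    exact no_triple hG h hA hx (hall x hx) hc ht hs (Ne.symm hxn.1) (Ne.symm hxn.2.2)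
      (Ne.symm hxn.2.1) hcs.symm hst hadj ((pair_bd hG k hsS).imp G.adj_symm G.adj_symm)
  obtain ⟨B₁, S₁, B₁', B₂, S₂, B₂', k₁, k₂, h₁, h₂, hs₁, hs₂, hb₁, hb₂, hR | hP⟩ :=
    crossing_exists hG h ht₁ ht₂ hne (hall _ ht₁) (hall _ ht₂)
  · obtain ⟨c, hcT, n1, n2, -, -, a1, a2, rfl | rfl⟩ := hR
    · exact key hcT ht₁ ht₂ n1 n2 hne a2 k₁ hs₁
    · exact key hcT ht₂ ht₁ n2 n1 hne.symm a1 k₂ hs₂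
  · obtain ⟨c, hcT, d, hdT, n1, n2, -, -, rfl, -, -, -, a2, -⟩ := hP
    exact key hcT ht₁ ht₂ n1 n2 hne a2 k₁ hs₁

lemma pair_adj (hG : Crit G) (h : NCut G {y, y'} T A') : G.Adj y y' := by
  obtain ⟨t, ht, hy⟩ := both_miss hG h
  exact pair_adj_of_miss hG h ht hy

/-- If a two-vertex fragment `{c, t}` has an adjacent pair `y, y'` and a further vertex `s`
adjacent to `y` in its cut, and `c` sees `y` and `y'`, then `s` is the vertex `c` misses. -/
lemma miss_eq (hG : Crit G) {c t s : V} (k : NCut G {c, t} S B') (hy : y ∈ S) (hy' : y' ∈ S)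
    (hs : s ∈ S) (hsy : s ≠ y) (hsy' : s ≠ y') (hyy : G.Adj y y') (hys : G.Adj y s)
    (hcy : G.Adj c y) (hcy' : G.Adj c y') : ¬ G.Adj c s := by
  obtain ⟨x, hx, hcx⟩ := both_miss hG k
  have hxy : y ≠ x := by rintro rfl; exact hcx hcy
  have hxy' : y' ≠ x := by rintro rfl; exact hcx hcy'
  by_cases hxs : s = x
  · exact hxs ▸ hcx
  · exact (no_triple hG k (Finset.card_pair k.ne) hx (miss_thru hG k hx hcx) hy hy' hs hxy hxy' hxs
      hsy hsy' hyy (Or.inl hys.symm)).elim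

/-- The path-like crossing always occurs, at the two vertices missed by `y` and `y'`. -/
lemma path_case (hG : Crit G) (h : NCut G {y, y'} T A') (ht₁ : t₁ ∈ T) (ht₂ : t₂ ∈ T)
    (hy : ¬ G.Adj y t₂) (hy' : ¬ G.Adj y' t₁) :
    ∃ B₁ S₁ B₁' B₂ S₂ B₂', NCut G B₁ S₁ B₁' ∧ NCut G B₂ S₂ B₂' ∧ {y, y'} ⊆ S₁ ∧ {y, y'} ⊆ S₂ ∧
      t₁ ∈ S₁ ∧ t₂ ∈ S₂ ∧ t₁ ∈ B₂ ∧ t₂ ∈ B₁ ∧ G.Adj y t₁ ∧ G.Adj y' t₂ ∧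
      CaseP G y y' t₁ t₂ T B₁ S₁ B₁' B₂ S₂ B₂' := by
  have a1 : G.Adj y t₁ := (pair_bd hG h ht₁).resolve_right hy'
  have a2 : G.Adj y' t₂ := (pair_bd hG h ht₂).resolve_left hy
  have hne : t₁ ≠ t₂ := by rintro rfl; exact hy a1
  have hyy := pair_adj hG h
  have hyT : y ∉ T := h.dAT y (by simp)
  have hyT' : y' ∉ T := h.dAT y' (by simp)
  have m1 : t₁ ≠ y := by rintro rfl; exact hyT ht₁
  have m1' : t₁ ≠ y' := by rintro rfl; exact hyT' ht₁
  have m2 : t₂ ≠ y := by rintro rfl; exact hyT ht₂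
  have m2' : t₂ ≠ y' := by rintro rfl; exact hyT' ht₂
  obtain ⟨B₁, S₁, B₁', B₂, S₂, B₂', k₁, k₂, h₁, h₂, hs₁, hs₂, hb₁, hb₂, hR | hP⟩ :=
    crossing_exists hG h ht₁ ht₂ hne (thru_swap (miss_thru hG (swap h) ht₁ hy'))
      (miss_thru hG h ht₂ hy)
  · exfalso
    obtain ⟨c, hcT, n1, n2, cy, cy', c1, c2, rfl | rfl⟩ := hR
    · exact miss_eq hG k₁ (h₁ (by simp)) (h₁ (by simp)) hs₁ m1 m1' hyy a1 cy cy' c1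
    · exact miss_eq hG k₂ (h₂ (by simp)) (h₂ (by simp)) hs₂ m2' m2 hyy.symm a2 cy' cy c2
  · exact ⟨B₁, S₁, B₁', B₂, S₂, B₂', k₁, k₂, h₁, h₂, hs₁, hs₂, hb₁, hb₂, a1, a2, hP⟩

/-- There is no two-vertex fragment. Applying `path_case` to `{y, y'}` gives the fragment `{c, t₂}`,
where `t₂` misses `y` and `c` misses `t₁`; applying it again to that fragment gives a fragment
`{m, t₁}` with too many neighbours. -/
lemma no_pair (hG : Crit G) (h : NCut G {y, y'} T A') : False := by
  obtain ⟨t₂, ht₂, hy⟩ := both_miss hG h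
  obtain ⟨t₁, ht₁, hy'⟩ := both_miss hG (swap h)
  have hyy := pair_adj hG h
  have hyT : y ∉ T := h.dAT y (by simp)
  have hyT' : y' ∉ T := h.dAT y' (by simp)
  have m1 : t₁ ≠ y := by rintro rfl; exact hyT ht₁
  have m1' : t₁ ≠ y' := by rintro rfl; exact hyT' ht₁
  have m2 : t₂ ≠ y := by rintro rfl; exact hyT ht₂
  have m2' : t₂ ≠ y' := by rintro rfl; exact hyT' ht₂
  obtain ⟨B₁, S₁, B₁', B₂, S₂, B₂', k₁, k₂, h₁, h₂, hs₁, hs₂, hb₁, hb₂, a1, a2, c, hcT, d, hdT,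
    n1, n2, hc2, hd1, rfl, rfl, cy, cy', ct, dy, dy', dt, hcap, hfar⟩ :=
    path_case hG h ht₁ ht₂ hy hy'
  have y1 : y ∈ S₁ := h₁ (by simp)
  have y1' : y' ∈ S₁ := h₁ (by simp)
  have y2' : y' ∈ S₂ := h₂ (by simp)
  have hct₁ : ¬ G.Adj c t₁ := miss_eq hG k₁ y1 y1' hs₁ m1 m1' hyy a1 cy cy'
  have y2 : y ∈ S₂ := h₂ (by simp)
  -- the fragment `{t₂, c}` with its missed vertices `y` and `t₁`
  obtain ⟨C₁, U₁, C₁', C₂, U₂, C₂', l₁, l₂, -, -, -, -, -, hyC, -, -, -, -, m, hmS, -, -, -, hm1, -,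
    rfl, -, -, -, mt, mc, mt₁, -, -⟩ :=
    path_case hG (swap k₁) hs₁ y1 (fun hh => hy hh.symm) hct₁
  have my : m ≠ y := by rintro rfl; exact l₁.dAA _ hyC hm1
  have my' : m ≠ y' := by rintro rfl; exact hy' mt₁
  have mt₁n : m ≠ t₁ := G.ne_of_adj mt₁
  have hmS₂ : m ∈ S₂ := by
    rcases k₂.nbr hb₁ mt₁.symm with hm | hm
    · rw [Finset.mem_insert, Finset.mem_singleton] at hm
      rcases hm with rfl | rfl
      · exact absurd hd1 (k₁.dTA _ hmS)
      · exact absurd rfl mt₁n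
    · exact hm
  have hmSS : m ∈ S₁ ∩ S₂ := Finset.mem_inter.2 ⟨hmS, hmS₂⟩
  have h3 : 3 ≤ (S₁ ∩ S₂).card := by
    rw [← Finset.card_eq_three.2 ⟨y, y', m, h.ne, my.symm, my'.symm, rfl⟩]
    apply Finset.card_le_card
    intro v hv
    simp only [Finset.mem_insert, Finset.mem_singleton] at hv
    rw [Finset.mem_inter]
    rcases hv with rfl | rfl | rfl <;> exact ⟨by assumption, by assumption⟩
  obtain ⟨f, hf, hfm⟩ := hfar h3 m hmSS
  obtain ⟨hcm, hdm⟩ := hcap m hmSS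
  rw [Finset.mem_inter] at hf
  have hcB₁ : c ∈ ({c, t₂} : Finset V) := by simp
  have hdB₂ : d ∈ ({d, t₁} : Finset V) := by simp
  have hcS₂ : c ∉ S₂ := fun hh => k₂.dTA c hh hc2
  have hdS₂ : d ∉ S₂ := k₂.dAT d hdB₂
  have hfS₂ : f ∉ S₂ := fun hh => k₂.dTA f hh hf.2
  have hcd : c ≠ d := by rintro rfl; exact k₁.dAA _ hcB₁ hd1
  have hcf : c ≠ f := by rintro rfl; exact k₁.dAA _ hcB₁ hf.1
  have hdf : d ≠ f := by rintro rfl; exact k₂.dAA _ hdB₂ hf.2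
  have hft₁ : f ≠ t₁ := by rintro rfl; exact k₂.dAA _ hb₁ hf.2
  -- `c, d, f` and three vertices of `S₂` all border the fragment `{m, t₁}`: too many
  have hsub : insert c (insert d (insert f ((S₂.erase y').erase m))) ⊆ U₂ := by
    intro u hu
    simp only [Finset.mem_insert, Finset.mem_erase] at hu
    rcases hu with rfl | rfl | rfl | ⟨hum, huy, huS⟩
    · exact (pair_nbr l₂ hcm.symm).resolve_left n1
    · exact (pair_nbr l₂ hdm.symm).resolve_left (G.ne_of_adj dt)
    · exact (pair_nbr l₂ hfm.symm).resolve_left hft₁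
    · have hadj : G.Adj t₁ u := by
        by_contra hc
        exact huy (pair_unique hG (swap k₂) huS y2' hc fun hh => hy' hh.symm)
      exact (pair_nbr (swap l₂) hadj).resolve_left hum
  have hle := Finset.card_le_card hsub
  rw [Finset.card_insert_of_notMem (by simp [hcd, hcf, hcS₂]),
    Finset.card_insert_of_notMem (by simp [hdf, hdS₂]),
    Finset.card_insert_of_notMem (by simp [hfS₂]),
    Finset.card_erase_of_mem (Finset.mem_erase.2 ⟨my', hmS₂⟩),
    Finset.card_erase_of_mem y2', k₂.card, l₂.card] at hle
  omega

/-- In a finite 5-connected graph with an edge, some edge lies in no 5-cut with at least two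
vertices on each side. -/
lemma no_crit (hG : Crit G) (x y : V) (hxy : G.Adj x y) : False := by
  classical
  let Frag : Set (Finset V) := {A | ∃ T A', NCut G A T A'}
  obtain ⟨B, S, B', k, -⟩ := hG.edge x y hxy
  have hne : Frag.Nonempty := ⟨B, S, B', k⟩
  obtain ⟨A, ⟨T, A', h⟩, hmin⟩ := Set.exists_min_image Frag Finset.card (Set.toFinite _) hne
  obtain ⟨u, v, -, rfl⟩ := Finset.card_eq_two.1
    (min_two hG h fun K S K' hK => hmin K ⟨S, K', hK⟩)
  exact no_pair hG h

/-! ### Contractions and cuts -/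

lemma connected_no_split {W : Type*} {H : SimpleGraph W} {S A B : Set W}
    (hc : (H.induce Sᶜ).Connected) (hA : A.Nonempty) (hB : B.Nonempty) (hd : Disjoint A B)
    (hu : A ∪ B = Sᶜ) (hn : ∀ a ∈ A, ∀ b ∈ B, ¬ H.Adj a b) : False := by
  obtain ⟨a, ha⟩ := hA
  obtain ⟨b, hb⟩ := hB
  have key : ∀ u v : (Sᶜ : Set W), (H.induce Sᶜ).Walk u v → u.1 ∈ A → v.1 ∈ A := by
    intro u v p
    induction p with
    | nil => exact id
    | @cons u v w huv p ih =>
      intro hu'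
      refine ih ?_
      have hv : v.1 ∈ A ∪ B := by rw [hu]; exact v.2
      exact hv.resolve_right fun hv => hn u.1 hu' v.1 hv huv
  obtain ⟨p⟩ := hc.preconnected ⟨a, by rw [← hu]; exact Or.inl ha⟩
    ⟨b, by rw [← hu]; exact Or.inr hb⟩
  exact Set.disjoint_left.1 hd (key _ _ p ha) hb

lemma exists_split {W : Type*} {H : SimpleGraph W} {S : Set W}
    (hc : ¬ (H.induce Sᶜ).Connected) (hne : (Sᶜ).Nonempty) :
    ∃ A B : Set W, A.Nonempty ∧ B.Nonempty ∧ Disjoint A B ∧ A ∪ B = Sᶜ ∧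
      ∀ a ∈ A, ∀ b ∈ B, ¬ H.Adj a b := by
  have : ¬ (H.induce Sᶜ).Preconnected := fun hp =>
    hc (@SimpleGraph.Connected.mk _ _ hp hne.to_subtype)
  unfold SimpleGraph.Preconnected at this
  push Not at this
  obtain ⟨u, v, huv⟩ := this
  refine ⟨{w | ∃ h : w ∈ Sᶜ, (H.induce Sᶜ).Reachable u ⟨w, h⟩},
    {w | ∃ h : w ∈ Sᶜ, ¬ (H.induce Sᶜ).Reachable u ⟨w, h⟩}, ⟨u.1, u.2, .refl _⟩,
    ⟨v.1, v.2, huv⟩, ?_, ?_, ?_⟩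
  · rw [Set.disjoint_left]
    rintro w ⟨h, hw⟩ ⟨h', hw'⟩
    exact hw' hw
  · ext w
    simp only [Set.mem_union, Set.mem_ofPred_eq]
    constructor
    · rintro (⟨h, -⟩ | ⟨h, -⟩) <;> exact h
    · intro h
      by_cases hr : (H.induce Sᶜ).Reachable u ⟨w, h⟩
      · exact Or.inl ⟨h, hr⟩
      · exact Or.inr ⟨h, hr⟩
  · rintro a ⟨ha, hra⟩ b ⟨hb, hrb⟩ hab
    refine hrb (hra.trans ?_)
    exact SimpleGraph.Adj.reachable (G := H.induce Sᶜ) (u := ⟨a, ha⟩) (v := ⟨b, hb⟩) hab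

/-- Without vertices of degree at most four, a quasi 5-connected graph is 5-connected. -/
lemma conn_of_quasi (hq : QuasiFiveConnected G)
    (hdeg : ∀ (v : V) (S : Finset V), (∀ u, G.Adj v u → u ∈ S) → 5 ≤ S.card)
    (K S : Finset V) (hK : ∃ a ∈ K, a ∉ S) (hv : ∃ v, v ∉ K ∧ v ∉ S)
    (hn : ∀ a ∈ K, a ∉ S → ∀ b, G.Adj a b → b ∈ K ∨ b ∈ S) : 5 ≤ S.card := by
  by_contra! hlt
  obtain ⟨a, haK, haS⟩ := hK
  obtain ⟨v, hvK, hvS⟩ := hv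
  have hd : Disjoint (↑(K \ S) : Set V) ↑(Finset.univ \ (K ∪ S)) := by
    rw [Finset.disjoint_coe, Finset.disjoint_left]
    intro w hw hw'
    simp only [Finset.mem_sdiff, Finset.mem_union, Finset.mem_univ, true_and] at hw hw'
    tauto
  have hu : (↑(K \ S) : Set V) ∪ ↑(Finset.univ \ (K ∪ S)) = (↑S : Set V)ᶜ := by
    ext w
    simp only [Finset.coe_sdiff, Finset.coe_union, Finset.coe_univ, Set.mem_union, Set.mem_sdiff,
      Set.mem_univ, true_and, Set.mem_compl_iff]
    tauto
  have hna : ∀ a ∈ (↑(K \ S) : Set V), ∀ b ∈ (↑(Finset.univ \ (K ∪ S)) : Set V),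
      ¬ G.Adj a b := by
    intro a ha b hb hab
    simp only [Finset.mem_coe, Finset.mem_sdiff, Finset.mem_union, Finset.mem_univ,
      true_and] at ha hb
    exact hb (hn a ha.1 ha.2 b hab)
  have ha : a ∈ K \ S := by simp [*]
  have hv : v ∈ Finset.univ \ (K ∪ S) := by simp [*]
  rcases Nat.lt_or_ge S.card 4 with h4 | h4
  · exact connected_no_split (hq.1.2 ↑S (by rwa [Set.ncard_coe_finset])) ⟨a, ha⟩ ⟨v, hv⟩ hd hu hna
  · refine hq.2 ↑S ⟨by rw [Set.ncard_coe_finset]; omega, _, _, ?_, ?_, hd, hu, hna⟩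
    · rw [Set.ncard_coe_finset]
      by_contra! h1
      have := hdeg a S (by
        intro u hu
        by_contra huS
        have hu' : u ∈ K \ S := by
          rw [Finset.mem_sdiff]
          exact ⟨(hn a haK haS u hu).resolve_right huS, huS⟩
        exact G.ne_of_adj hu (Finset.card_le_one.1 (by omega) a ha u hu'))
      omega
    · rw [Set.ncard_coe_finset]
      by_contra! h1
      have := hdeg v S (by
        intro u hu
        by_contra huS
        have hu' : u ∈ Finset.univ \ (K ∪ S) := by
          simp only [Finset.mem_sdiff, Finset.mem_union, Finset.mem_univ, true_and, not_or]
          refine ⟨fun huK => ?_, huS⟩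
          rcases hn u huK huS v hu.symm with h | h
          · exact hvK h
          · exact hvS h
        exact G.ne_of_adj hu (Finset.card_le_one.1 (by omega) v hv u hu'))
      omega

/-- The vertices of `G` underlying a set of vertices of the contraction. -/
def lift {y : V} (X : Finset {v : V // v ≠ y}) : Finset V := X.map (Function.Embedding.subtype _)

lemma mem_lift {y : V} {X : Finset {v : V // v ≠ y}} {v : V} :
    v ∈ lift X ↔ ∃ h : v ≠ y, (⟨v, h⟩ : {v : V // v ≠ y}) ∈ X := by
  simp [lift]

/-- A small separating set of the contraction contains the contracted vertex, and together with
the removed endpoint it becomes a 5-cut of the original graph. -/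
lemma contr_sep
    (hconn : ∀ K S : Finset V, (∃ a ∈ K, a ∉ S) → (∃ v, v ∉ K ∧ v ∉ S) →
      (∀ a ∈ K, a ∉ S → ∀ b, G.Adj a b → b ∈ K ∨ b ∈ S) → 5 ≤ S.card)
    {x y : V} (hxy : x ≠ y) {A S B : Finset {v : V // v ≠ y}} (hA : A.Nonempty) (hB : B.Nonempty)
    (hd : Disjoint A B) (hu : ∀ v, v ∈ A ∨ v ∈ B ↔ v ∉ S)
    (hn : ∀ a ∈ A, ∀ b ∈ B, ¬ (contractE G x y).Adj a b) (hS : S.card ≤ 4) :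
    (⟨x, hxy⟩ : {v : V // v ≠ y}) ∈ S ∧ S.card = 4 := by
  have hcard : (lift S).card = S.card := Finset.card_map _
  have hAdj : ∀ a b : {v : V // v ≠ y}, a ≠ b → (G.Adj a.1 b.1 ∨ (a.1 = x ∧ G.Adj y b.1)) →
      (contractE G x y).Adj a b := by
    intro a b hne hab
    unfold contractE
    rw [SimpleGraph.fromRel_adj]
    tauto
  have key : ∀ {A B : Finset {v : V // v ≠ y}}, A.Nonempty → B.Nonempty → Disjoint A B →
      (∀ v, v ∈ A ∨ v ∈ B ↔ v ∉ S) → (∀ a ∈ A, ∀ b ∈ B, ¬ (contractE G x y).Adj a b) →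
      (⟨x, hxy⟩ : {v : V // v ≠ y}) ∉ A := by
    intro A B hA hB hd hu hn hxA
    have hyS : y ∉ lift S := fun hh => (mem_lift.1 hh).1 rfl
    obtain ⟨b, hb⟩ := hB
    have := hconn (insert y (lift A)) (lift S) ⟨y, by simp, hyS⟩ ⟨b.1, ?_, ?_⟩ ?_
    · omega
    · rw [Finset.mem_insert, not_or]
      refine ⟨b.2, fun hh => ?_⟩
      obtain ⟨h, hh⟩ := mem_lift.1 hh
      exact Finset.disjoint_left.1 hd hh hb
    · intro hh
      obtain ⟨h, hh⟩ := mem_lift.1 hh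
      exact (hu b).1 (Or.inr hb) hh
    · intro a ha _ b hab
      by_cases hby : b = y
      · simp [hby]
      rw [Finset.mem_insert, mem_lift, mem_lift]
      by_contra! hc
      have hbB : (⟨b, hby⟩ : {v : V // v ≠ y}) ∈ B :=
        ((hu ⟨b, hby⟩).2 (hc.2 hby)).resolve_left (hc.1.2 hby)
      rw [Finset.mem_insert, mem_lift] at ha
      rcases ha with rfl | ⟨hay, haA⟩
      · refine hn _ hxA _ hbB (hAdj _ _ ?_ (Or.inr ⟨rfl, hab⟩))
        intro hh
        exact hc.1.2 hby (hh ▸ hxA)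
      · refine hn _ haA _ hbB (hAdj _ _ ?_ (Or.inl hab))
        intro hh
        exact hc.1.2 hby (hh ▸ haA)
  have hxA := key hA hB hd hu hn
  have hxB := key hB hA hd.symm (fun v => or_comm.trans (hu v))
    (fun a ha b hb hab => hn b hb a ha hab.symm)
  have hxS : (⟨x, hxy⟩ : {v : V // v ≠ y}) ∈ S := by
    by_contra hh
    exact ((hu _).2 hh).elim hxA hxB
  refine ⟨hxS, ?_⟩
  obtain ⟨a, ha⟩ := hA
  obtain ⟨b, hb⟩ := hB
  have := hconn (lift A) (insert y (lift S)) ⟨a.1, mem_lift.2 ⟨a.2, ha⟩, ?_⟩ ⟨b.1, ?_, ?_⟩ ?_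
  · have h1 := Finset.card_insert_le y (lift S)
    omega
  · rw [Finset.mem_insert, not_or]
    refine ⟨a.2, fun hh => ?_⟩
    obtain ⟨h, hh⟩ := mem_lift.1 hh
    exact (hu a).1 (Or.inl ha) hh
  · intro hh
    obtain ⟨h, hh⟩ := mem_lift.1 hh
    exact Finset.disjoint_left.1 hd hh hb
  · rw [Finset.mem_insert, not_or]
    refine ⟨b.2, fun hh => ?_⟩
    obtain ⟨h, hh⟩ := mem_lift.1 hh
    exact (hu b).1 (Or.inr hb) hh
  · intro a ha _ b hab
    by_cases hby : b = y
    · simp [hby]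
    rw [Finset.mem_insert, mem_lift, mem_lift]
    by_contra! hc
    obtain ⟨hay, haA⟩ := mem_lift.1 ha
    have hbB : (⟨b, hby⟩ : {v : V // v ≠ y}) ∈ B :=
      ((hu ⟨b, hby⟩).2 (hc.2.2 hby)).resolve_left (hc.1 hby)
    refine hn _ haA _ hbB (hAdj _ _ ?_ (Or.inl hab))
    intro hh
    exact hc.1 hby (hh ▸ haA)

/-- Contraction criticality provides the 5-cuts through the edges, by `contr_sep`. -/
lemma crit_of (hcc : ContractionCriticalQuasiFive G)
    (hdeg : ∀ (v : V) (S : Finset V), (∀ u, G.Adj v u → u ∈ S) → 5 ≤ S.card) : Crit G where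
  conn := conn_of_quasi hcc.1 hdeg
  deg := hdeg
  edge x y hxy := by
    have hconn := conn_of_quasi hcc.1 hdeg
    have hne := G.ne_of_adj hxy
    have hcardV : 6 ≤ Fintype.card V := by
      have := hdeg x (Finset.univ.erase x) fun u hu => by
        simpa using (G.ne_of_adj hu).symm
      rw [Finset.card_erase_of_mem (Finset.mem_univ x), Finset.card_univ] at this
      omega
    have hcardW : Fintype.card {v : V // v ≠ y} = Fintype.card V - 1 := by simp
    -- any separation of the contraction by at most four vertices
    have key : ∀ A S B : Set {v : V // v ≠ y}, A.Nonempty → B.Nonempty → Disjoint A B →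
        A ∪ B = Sᶜ → (∀ a ∈ A, ∀ b ∈ B, ¬ (contractE G x y).Adj a b) → S.ncard ≤ 4 →
        S.ncard = 4 ∧ (2 ≤ A.ncard → 2 ≤ B.ncard →
          ∃ B T B', NCut G B T B' ∧ x ∈ T ∧ y ∈ T) := by
      intro A S B hA hB hd hu hn hS
      obtain ⟨A, rfl⟩ := A.toFinite.exists_finset_coe
      obtain ⟨S, rfl⟩ := S.toFinite.exists_finset_coe
      obtain ⟨B, rfl⟩ := B.toFinite.exists_finset_coe
      simp only [Set.ncard_coe_finset] at *
      rw [Finset.disjoint_coe] at hd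
      have hu' : ∀ v, v ∈ A ∨ v ∈ B ↔ v ∉ S := fun v => by
        have := Set.ext_iff.1 hu v
        simpa using this
      have hyS : y ∉ lift S := fun hh => (mem_lift.1 hh).1 rfl
      obtain ⟨hxS, h4⟩ := contr_sep hconn hne (Finset.coe_nonempty.1 hA)
        (Finset.coe_nonempty.1 hB) hd hu' hn hS
      refine ⟨h4, fun hA2 hB2 => ⟨lift A, insert y (lift S), lift B, ?_,
        by rw [Finset.mem_insert, mem_lift]; exact Or.inr ⟨hne, hxS⟩, by simp⟩⟩
      refine ⟨?_, ?_, ?_, ?_, ?_, ?_, ?_, ?_⟩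
      · intro v
        by_cases hv : v = y
        · simp [hv]
        · rw [Finset.mem_insert, mem_lift, mem_lift, mem_lift]
          have := hu' ⟨v, hv⟩
          by_cases hvS : (⟨v, hv⟩ : {v : V // v ≠ y}) ∈ S
          · exact Or.inr (Or.inl (Or.inr ⟨hv, hvS⟩))
          · exact (this.2 hvS).elim (fun h => Or.inl ⟨hv, h⟩) (fun h => Or.inr (Or.inr ⟨hv, h⟩))
      · intro v hv hv'
        obtain ⟨h, hv⟩ := mem_lift.1 hv
        rw [Finset.mem_insert, mem_lift] at hv'
        rcases hv' with rfl | ⟨_, hv'⟩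
        · exact h rfl
        · exact (hu' _).1 (Or.inl hv) hv'
      · intro v hv hv'
        obtain ⟨h, hv⟩ := mem_lift.1 hv
        obtain ⟨h, hv'⟩ := mem_lift.1 hv'
        exact Finset.disjoint_left.1 hd hv hv'
      · intro v hv' hv
        obtain ⟨h, hv⟩ := mem_lift.1 hv
        rw [Finset.mem_insert, mem_lift] at hv'
        rcases hv' with rfl | ⟨_, hv'⟩
        · exact h rfl
        · exact (hu' _).1 (Or.inr hv) hv'
      · intro a ha b hb hab
        obtain ⟨h, ha⟩ := mem_lift.1 ha
        obtain ⟨h', hb⟩ := mem_lift.1 hb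
        refine hn _ ha _ hb ?_
        unfold contractE
        rw [SimpleGraph.fromRel_adj]
        refine ⟨fun hh => ?_, Or.inl (Or.inl hab)⟩
        rw [hh] at ha
        exact Finset.disjoint_left.1 hd ha hb
      · rw [Finset.card_insert_of_notMem hyS, lift, Finset.card_map, h4]
      · rwa [lift, Finset.card_map]
      · rwa [lift, Finset.card_map]
    have hnot := hcc.2 x y hxy
    unfold QuasiFiveConnected at hnot
    rw [not_and_or] at hnot
    rcases hnot with hnot | hnot
    · exfalso
      refine hnot ⟨by omega, fun S hS => ?_⟩
      by_contra hc
      have hSne : (Sᶜ).Nonempty := by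
        rw [Set.nonempty_compl]
        rintro rfl
        rw [Set.ncard_univ, Nat.card_eq_fintype_card] at hS
        omega
      obtain ⟨A, B, hA, hB, hd, hu, hn⟩ := exists_split hc hSne
      have := (key A S B hA hB hd hu hn (by omega)).1
      omega
    · push Not at hnot
      obtain ⟨T, hT4, A, B, hA2, hB2, hd, hu, hn⟩ := hnot
      have hA : A.Nonempty := by
        rw [Set.nonempty_iff_ne_empty]
        rintro rfl
        simp at hA2
      have hB : B.Nonempty := by
        rw [Set.nonempty_iff_ne_empty]
        rintro rfl
        simp at hB2
      exact (key A T B hA hB hd hu hn hT4.le).2 hA2 hB2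

end QFive

/-- A contraction critical quasi 5-connected graph with an edge,
minimum degree at least 4, and the degree sum condition has a vertex of degree
exactly 4. -/
theorem stmt11 {V : Type*} [Fintype V] [DecidableEq V] (G : SimpleGraph V)
    (hcc : ContractionCriticalQuasiFive G)
    (hedge : ∃ x y : V, G.Adj x y)
    (hmin : ∀ v : V, 4 ≤ (G.neighborSet v).ncard)
    (hdeg : DegSumNine G) :
    ∃ x : V, (G.neighborSet x).ncard = 4 := by
  by_contra! hno
  obtain ⟨x, y, hxy⟩ := hedge
  refine QFive.no_crit (QFive.crit_of hcc fun v S hS => ?_) x y hxy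
  have h1 := hmin v
  have h2 := hno v
  have h3 : (G.neighborSet v).ncard ≤ (↑S : Set V).ncard :=
    Set.ncard_le_ncard (fun u hu => hS u hu) S.finite_toSet
  rw [Set.ncard_coe_finset] at h3
  omega
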